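/- Let G be a finite simple graph in which every vertex has even degree, and suppose the graph polynomial F_G has a nonzero almost central coefficient (there is ξ with [x^ξ]F_G ≠ 0 and |ξ_i − deg_G(v_i)/2| ≤ 1 for all i). Then for every integer k ≥ 2 the Alon–Tarsi number of H = G □ C_{2k} satisfies AT(H) ≤ Δ(G)/2 + 2, where Δ(G) is the maximum degree of G (note Δ(H) = Δ(G) + 2, so this says AT(H) ≤ Δ(H)/2 + 1). -/

import Mathlib

/-!
The central coefficient of the graph polynomial of `H = G □ C_{2k}`, at the exponent
`deg_H / 2 = deg_G / 2 + 1`, is shown to be nonzero by the transfer matrix method.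

Orient the cycle edges from layer `i` to layer `i + 1` and expand the factors belonging to them;
a choice is a family of sets `S i ⊆ V`, the vertices whose cycle edge leaving layer `i` contributes
its head. For a fixed family, the variables of different layers separate, and the layer between
`S i = A` and `S (i + 1) = B` contributes `± [x ^ (deg / 2 + 1_B - 1_A)] F_G`. Hence the central
coefficient is `tr (N ^ (2k))` (`coeff_boxOrientation`) for the matrix `N`, indexed by subsets
of `V`, with these entries.

The symmetry `ξ ↦ deg - ξ` of `F_G` gives `Nᵀ = (-1) ^ |E| • N` (`coeff_layerPoly_symm`), so
`tr (N ^ (2k))` is up to sign the sum of the squares of the entries of `N ^ k`, which is nonzero as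
soon as `N ≠ 0` (`trace_pow_ne_zero`). The nonzero almost central coefficients of `F_G` are exactly
the nonzero entries of `N`, up to sign, so the hypothesis says that `N ≠ 0`
(`exists_coeff_layerPoly_ne_zero`).
-/

open MvPolynomial Finset

/-- An orientation of a simple graph: a finite set of ordered pairs containing,
for each edge `{u, v}` of `G`, exactly one of `(u, v)` and `(v, u)`. -/
structure GraphOrientation {V : Type*} (G : SimpleGraph V) where
  edges : Finset (V × V)
  adj_of_mem : ∀ e ∈ edges, G.Adj e.1 e.2
  mem_iff_not_swap_mem : ∀ u v : V, G.Adj u v → ((u, v) ∈ edges ↔ (v, u) ∉ edges)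

/-- The graph polynomial `∏_{(i,j) ∈ E} (x_j - x_i)` associated to an orientation. -/
noncomputable def graphPoly {V : Type*} {G : SimpleGraph V} (D : GraphOrientation G) :
    MvPolynomial V ℝ :=
  ∏ e ∈ D.edges, (X e.2 - X e.1)

/-- The outdegree of a vertex in an orientation. -/
def GraphOrientation.outDeg {V : Type*} [DecidableEq V] {G : SimpleGraph V}
    (D : GraphOrientation G) (v : V) : ℕ :=
  (D.edges.filter fun e => e.1 = v).card

/-- `G` is `f`-choosable: any assignment of lists of real colors with `|A_v| ≥ f v`
admits a proper coloring from the lists. -/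
def Choosable {V : Type*} (G : SimpleGraph V) (f : V → ℕ) : Prop :=
  ∀ A : V → Finset ℝ, (∀ v, f v ≤ (A v).card) →
    ∃ c : V → ℝ, (∀ v, c v ∈ A v) ∧ ∀ u v : V, G.Adj u v → c u ≠ c v

/-- The list chromatic number. -/
noncomputable def chNumber {V : Type*} (G : SimpleGraph V) : ℕ :=
  sInf {m | Choosable G fun _ => m}

/-- The Alon–Tarsi number: the least `k` such that the graph polynomial has a
monomial `x^d` with nonzero coefficient and `max_v d_v = k - 1`. -/
noncomputable def ATNumber {V : Type*} (G : SimpleGraph V) : ℕ :=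
  sInf {k | ∃ (D : GraphOrientation G) (d : V →₀ ℕ),
    MvPolynomial.coeff d (graphPoly D) ≠ 0 ∧ d.support.sup d + 1 = k}

instance {α β : Type*} {G : SimpleGraph α} {H : SimpleGraph β}
    [DecidableEq α] [DecidableEq β] [DecidableRel G.Adj] [DecidableRel H.Adj] :
    DecidableRel (G.boxProd H).Adj :=
  fun _ _ => decidable_of_iff _ SimpleGraph.boxProd_adj.symm

/-! ### Traces of powers of real (skew-)symmetric matrices -/

/-- `N ^ n` expanded as a sum over walks with `n` steps, paired with an arbitrary weight `g` on the
two endpoints; the weight is what makes the induction on `n` go through. -/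
lemma sum_paths {ι : Type*} [Fintype ι] [DecidableEq ι] (N : Matrix ι ι ℝ) (n : ℕ) :
    ∀ g : ι → ι → ℝ, ∑ S : Fin (n + 1) → ι, g (S 0) (S (Fin.last n)) *
        ∏ i : Fin n, N (S i.castSucc) (S i.succ) = ∑ a, ∑ b, g a b * (N ^ n) a b := by
  induction n with
  | zero =>
    intro g
    rw [← (Equiv.funUnique (Fin 1) ι).symm.sum_comp]
    simp [Matrix.one_apply]
  | succ n ih =>
    intro g
    rw [← (Fin.consEquiv (fun _ => ι)).sum_comp, Fintype.sum_prod_type]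
    refine Finset.sum_congr rfl fun a _ => ?_
    have := ih (fun b c => N a b * g a c)
    simp only [Fin.consEquiv_apply, Fin.cons_zero, ← Fin.succ_last, Fin.cons_succ,
      Fin.prod_univ_succ, Fin.castSucc_zero, Fin.castSucc_succ]
    rw [pow_succ']
    simp only [Matrix.mul_apply, Finset.mul_sum]
    rw [Finset.sum_comm]
    calc _ = _ := Finset.sum_congr rfl fun S _ => by ring
      _ = _ := this
      _ = _ := by
        refine Finset.sum_congr rfl fun b _ => Finset.sum_congr rfl fun c _ => ?_
        ring

lemma sum_closed_walks {ι : Type*} [Fintype ι] [DecidableEq ι] (N : Matrix ι ι ℝ) (n : ℕ) :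
    ∑ S : Fin (n + 1) → ι, ∏ i, N (S i) (S (i + 1)) = (N ^ (n + 1)).trace := by
  have := sum_paths N n (fun a b => N b a)
  simp only [Matrix.trace, Matrix.diag, pow_succ', Matrix.mul_apply]
  rw [Finset.sum_comm, ← this]
  refine Finset.sum_congr rfl fun S _ => ?_
  rw [Fin.prod_univ_castSucc, mul_comm]
  simp

/-- A nonzero real matrix whose transpose is a multiple of itself is not nilpotent: `N ^ (2 * m) = 0`
gives `N ^ m * (N ^ m)ᵀ = 0`, hence `N ^ m = 0`, and so all `N ^ (2 ^ j)` are nonzero. -/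
lemma pow_ne_zero_of_transpose {ι : Type*} [Fintype ι] [DecidableEq ι] (N : Matrix ι ι ℝ)
    (σ : ℝ) (hN : N.transpose = σ • N) (h0 : N ≠ 0) (k : ℕ) : N ^ k ≠ 0 := by
  have key : ∀ m, N ^ (2 * m) = 0 → N ^ m = 0 := by
    intro m hm
    rw [← Matrix.self_mul_conjTranspose_eq_zero, Matrix.conjTranspose_eq_transpose_of_trivial,
      Matrix.transpose_pow, hN, smul_pow, Matrix.mul_smul, ← pow_add, ← two_mul, hm, smul_zero]
  have h2 : ∀ j, N ^ (2 ^ j) ≠ 0 := by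
    intro j
    induction j with
    | zero => simpa using h0
    | succ j ih => rw [pow_succ']; exact fun h => ih (key _ h)
  exact fun h => h2 k (pow_eq_zero_of_le (Nat.lt_two_pow_self).le h)

/-- Since `(N ^ k)ᵀ = σ ^ k • N ^ k`, the number `σ ^ k * tr (N ^ (2 * k))` is the sum of the squares
of the entries of `N ^ k`. -/
lemma trace_pow_ne_zero {ι : Type*} [Fintype ι] [DecidableEq ι] (N : Matrix ι ι ℝ)
    (σ : ℝ) (hN : N.transpose = σ • N) (h0 : N ≠ 0) (k : ℕ) :
    (N ^ (2 * k)).trace ≠ 0 := by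
  intro h
  apply pow_ne_zero_of_transpose N σ hN h0 k
  rw [← Matrix.trace_mul_conjTranspose_self_eq_zero_iff,
    Matrix.conjTranspose_eq_transpose_of_trivial,
    Matrix.transpose_pow, hN, smul_pow, Matrix.mul_smul, ← pow_add, ← two_mul, Matrix.trace_smul, h,
    smul_zero]

/-! ### Coefficients of the graph polynomial -/

/-- Coefficients are multiplicative over polynomials in disjoint blocks of variables. -/
lemma coeff_prod_rename {V I : Type*} [Fintype V] [Fintype I] [DecidableEq V] [DecidableEq I]
    (p : I → MvPolynomial V ℝ) (d : V × I →₀ ℕ) (c : I → V →₀ ℕ) (hd : ∀ v i, d (v, i) = c i v) :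
    coeff d (∏ i, rename (fun v => (v, i)) (p i)) = ∏ i, coeff (c i) (p i) := by
  have hp : ∀ i, rename (fun v => (v, i)) (p i) = ∑ m ∈ (p i).support,
      monomial (m.mapDomain fun v => (v, i)) (coeff m (p i)) := by
    intro i
    conv_lhs => rw [(p i).as_sum]
    rw [map_sum]
    simp only [rename_monomial]
  have heq : ∀ m : I → V →₀ ℕ, (∑ i, (m i).mapDomain fun v => (v, i)) = d ↔ m = c := by
    intro m
    have h1 : ∀ v j, (∑ i, (m i).mapDomain fun v => (v, i)) (v, j) = m j v := by
      intro v j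
      rw [Finsupp.finsetSum_apply, Finset.sum_eq_single j]
      · exact Finsupp.mapDomain_apply (f := fun v : V => (v, j)) (fun a b h => by simpa using h) _ _
      · intro i _ hij
        apply Finsupp.mapDomain_of_notMem_range
        rintro ⟨w, hw⟩
        simp at hw
        exact hij hw.2
      · simp
    constructor
    · intro h
      funext j
      ext v
      rw [← h1, h, hd]
    · rintro rfl
      ext ⟨v, j⟩
      rw [h1, hd]
  simp_rw [hp]
  rw [Finset.prod_univ_sum, coeff_sum]
  simp_rw [← monomial_sum_prod, coeff_monomial, heq]
  rw [Finset.sum_ite_eq']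
  split_ifs with h
  · rfl
  · simp only [Fintype.mem_piFinset, not_forall, notMem_support_iff] at h
    obtain ⟨i, hi⟩ := h
    exact (Finset.prod_eq_zero (Finset.mem_univ i) hi).symm

/-- Every orientation of `G` counts each vertex `v` exactly `G.degree v` times as an endpoint. -/
lemma sum_ends_apply {V : Type*} [Fintype V] [DecidableEq V] {G : SimpleGraph V}
    [DecidableRel G.Adj] (D : GraphOrientation G) (v : V) :
    (∑ e ∈ D.edges, Finsupp.single e.1 1 + ∑ e ∈ D.edges, Finsupp.single e.2 1 : V →₀ ℕ) v =
      G.degree v := by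
  rw [Finsupp.add_apply, Finsupp.finsetSum_apply, Finsupp.finsetSum_apply]
  simp only [Finsupp.single_apply, Finset.sum_boole, Nat.cast_id]
  rw [← SimpleGraph.card_neighborFinset_eq_degree,
    ← Finset.card_filter_add_card_filter_not (s := G.neighborFinset v) (fun w => (v, w) ∈ D.edges)]
  congr 1
  · refine Finset.card_nbij' (fun e => e.2) (fun w => (v, w)) ?_ ?_ ?_ ?_
    · rintro ⟨a, b⟩ h
      simp only [Finset.coe_filter, Set.mem_ofPred_eq, SimpleGraph.mem_neighborFinset] at h ⊢
      obtain ⟨h, rfl⟩ := h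
      exact ⟨D.adj_of_mem _ h, h⟩
    · intro w h
      simp only [Finset.coe_filter, Set.mem_ofPred_eq, SimpleGraph.mem_neighborFinset] at h ⊢
      exact ⟨h.2, trivial⟩
    · rintro ⟨a, b⟩ h
      simp only [Finset.coe_filter, Set.mem_ofPred_eq] at h ⊢
      rw [h.2]
    · intro w _
      rfl
  · refine Finset.card_nbij' (fun e => e.1) (fun w => (w, v)) ?_ ?_ ?_ ?_
    · rintro ⟨a, b⟩ h
      simp only [Finset.coe_filter, Set.mem_ofPred_eq, SimpleGraph.mem_neighborFinset] at h ⊢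
      obtain ⟨h, rfl⟩ := h
      exact ⟨(D.adj_of_mem _ h).symm, (D.mem_iff_not_swap_mem _ _ (D.adj_of_mem _ h)).1 h⟩
    · intro w h
      simp only [Finset.coe_filter, Set.mem_ofPred_eq, SimpleGraph.mem_neighborFinset] at h ⊢
      exact ⟨(D.mem_iff_not_swap_mem _ _ h.1.symm).2 h.2, trivial⟩
    · rintro ⟨a, b⟩ h
      simp only [Finset.coe_filter, Set.mem_ofPred_eq] at h ⊢
      rw [h.2]
    · intro w _
      rfl

/-- The expansion of the graph polynomial: `t` is the set of edges contributing their tail. -/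
lemma coeff_graphPoly_mul_monomial {V : Type*} [DecidableEq V] {G : SimpleGraph V}
    (D : GraphOrientation G) (a c : V →₀ ℕ) :
    coeff c (graphPoly D * monomial a 1) = ∑ t ∈ D.edges.powerset,
      if ∑ e ∈ D.edges \ t, Finsupp.single e.2 1 + ∑ e ∈ t, Finsupp.single e.1 1 + a = c
      then (-1 : ℝ) ^ #t else 0 := by
  rw [graphPoly, Finset.prod_sub, Finset.sum_mul, coeff_sum]
  refine Finset.sum_congr rfl fun t _ => ?_
  simp only [X, ← monomial_sum_one]
  rw [mul_assoc, mul_assoc, monomial_mul, monomial_mul, ← add_assoc]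
  have : ((-1) ^ #t : MvPolynomial V ℝ) = C ((-1) ^ #t) := by simp
  rw [this, coeff_C_mul, coeff_monomial]
  simp [add_assoc]

/-- The symmetry of the graph polynomial under `x ↦ x⁻¹`: exchanging the choice of endpoint at every
edge turns exponents `ξ` into `deg - ξ` and changes the sign by `(-1) ^ |E|`. Keeping the extra
monomials `a`, `b` inside the polynomial avoids truncated subtraction of exponents. -/
lemma coeff_reverse {V : Type*} [DecidableEq V] {G : SimpleGraph V}
    (D : GraphOrientation G) (a b c : V →₀ ℕ)
    (h : ∑ e ∈ D.edges, Finsupp.single e.1 1 + ∑ e ∈ D.edges, Finsupp.single e.2 1 + a + b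
      = c + c) :
    coeff c (graphPoly D * monomial b 1) =
      (-1) ^ #D.edges * coeff c (graphPoly D * monomial a 1) := by
  rw [coeff_graphPoly_mul_monomial, coeff_graphPoly_mul_monomial, Finset.mul_sum]
  refine Finset.sum_nbij' (fun t => D.edges \ t) (fun t => D.edges \ t) ?_ ?_ ?_ ?_ ?_
  · intro t _; simp
  · intro t _; simp
  · intro t ht; simpa using ht
  · intro t ht; simpa using ht
  · intro t ht
    rw [Finset.mem_powerset] at ht
    have h1 := Finset.sum_sdiff ht (f := fun e : V × V => (Finsupp.single e.1 1 : V →₀ ℕ))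
    have h2 := Finset.sum_sdiff ht (f := fun e : V × V => (Finsupp.single e.2 1 : V →₀ ℕ))
    rw [← h1, ← h2] at h
    rw [Finset.sdiff_sdiff_eq_self ht]
    generalize ∑ e ∈ D.edges \ t, (Finsupp.single e.2 1 : V →₀ ℕ) = p at *
    generalize ∑ e ∈ D.edges \ t, (Finsupp.single e.1 1 : V →₀ ℕ) = q at *
    generalize ∑ e ∈ t, (Finsupp.single e.2 1 : V →₀ ℕ) = r at *
    generalize ∑ e ∈ t, (Finsupp.single e.1 1 : V →₀ ℕ) = s at *
    have hiff : p + s + b = c ↔ r + q + a = c := by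
      simp only [DFunLike.ext_iff, Finsupp.add_apply] at h ⊢
      constructor <;> intro h' v <;> have := h v <;> have := h' v <;> omega
    have hs : (-1 : ℝ) ^ #t = (-1) ^ #D.edges * (-1) ^ #(D.edges \ t) := by
      rw [← Finset.card_sdiff_add_card_eq_card ht, pow_add, mul_right_comm, ← mul_pow]
      simp
    simp only [hiff, hs]
    split_ifs <;> simp

/-! ### The transfer matrix

The entries are the coefficients of `x ^ c` in `layerPoly D A B`, where `c v = deg v / 2 + 1`. -/

/-- The contribution of one copy of `G` in `G □ C_n`: the graph polynomial times the variables
chosen from the cycle edges at this layer. The vertices of `A` are those whose incoming cycle edge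
contributes its head; the vertices outside `B` are those whose outgoing cycle edge contributes its
tail, with sign `-1`. -/
noncomputable def layerPoly {V : Type*} [Fintype V] [DecidableEq V] {G : SimpleGraph V}
    (D : GraphOrientation G) (A B : Finset V) : MvPolynomial V ℝ :=
  graphPoly D * (∏ v ∈ A, X v) * ∏ v ∈ Bᶜ, (-X v)

/-- The exponent of the monomial that multiplies `graphPoly D` in `layerPoly D A B`. -/
noncomputable def layerExp {V : Type*} [Fintype V] [DecidableEq V] (A B : Finset V) : V →₀ ℕ :=
  ∑ v ∈ A, Finsupp.single v 1 + ∑ v ∈ Bᶜ, Finsupp.single v 1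

lemma layerExp_apply {V : Type*} [Fintype V] [DecidableEq V] (A B : Finset V) (v : V) :
    layerExp A B v = (if v ∈ A then 1 else 0) + (if v ∈ B then 0 else 1) := by
  simp only [layerExp, Finsupp.add_apply, Finsupp.finsetSum_apply, Finsupp.single_apply,
    Finset.sum_ite_eq', Finset.mem_compl]
  split_ifs <;> rfl

lemma layerPoly_eq {V : Type*} [Fintype V] [DecidableEq V] {G : SimpleGraph V}
    (D : GraphOrientation G) (A B : Finset V) :
    layerPoly D A B = C ((-1) ^ #Bᶜ) * (graphPoly D * monomial (layerExp A B) 1) := by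
  have : monomial (layerExp A B) (1 : ℝ) = (∏ v ∈ A, X v) * ∏ v ∈ Bᶜ, X v := by
    simp only [X, ← monomial_sum_one, monomial_mul, layerExp, mul_one]
  rw [layerPoly, this, Finset.prod_neg]
  simp only [map_pow, map_neg, map_one]
  ring

/-- Homogeneity: a nonzero coefficient of `x ^ c` forces the degrees to match. -/
lemma card_of_coeff_ne_zero {V : Type*} [Fintype V] [DecidableEq V] {G : SimpleGraph V}
    (D : GraphOrientation G) (A B : Finset V) (c : V →₀ ℕ)
    (h : coeff c (graphPoly D * monomial (layerExp A B) 1) ≠ 0) :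
    c.degree = #D.edges + (#A + #Bᶜ) := by
  have hF : (graphPoly D).IsHomogeneous (∑ e ∈ D.edges, 1) :=
    IsHomogeneous.prod _ _ _ fun e _ => (isHomogeneous_X _ _).sub (isHomogeneous_X _ _)
  have hM : (monomial (layerExp A B) (1 : ℝ)).IsHomogeneous (#A + #Bᶜ) :=
    isHomogeneous_monomial _ (by simp [layerExp])
  have := (hF.mul hM).coeff_eq_zero (d := c)
  by_contra hc
  exact h (this (by simpa using hc))

/-- The transfer matrix is symmetric or skew-symmetric. The signs `(-1) ^ |Bᶜ|` do not interfere: if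
the entries at `(A, B)` and `(B, A)` are nonzero, homogeneity gives `|A| = |B|`. -/
lemma coeff_layerPoly_symm {V : Type*} [Fintype V] [DecidableEq V] {G : SimpleGraph V}
    [DecidableRel G.Adj] (D : GraphOrientation G) (c : V →₀ ℕ)
    (hc : ∀ v, 2 * c v = G.degree v + 2) (A B : Finset V) :
    coeff c (layerPoly D B A) = (-1) ^ #D.edges * coeff c (layerPoly D A B) := by
  have hrev := coeff_reverse D (layerExp A B) (layerExp B A) c (by
    ext v
    rw [Finsupp.add_apply, Finsupp.add_apply, sum_ends_apply, layerExp_apply, layerExp_apply,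
      Finsupp.add_apply]
    have := hc v
    split_ifs <;> omega)
  rw [layerPoly_eq, layerPoly_eq, coeff_C_mul, coeff_C_mul, hrev]
  by_cases h0 : coeff c (graphPoly D * monomial (layerExp A B) 1) = 0
  · simp [h0]
  · have h1 := card_of_coeff_ne_zero D A B c h0
    have h2 := card_of_coeff_ne_zero D B A c (by rw [hrev]; simpa using h0)
    have h3 := Finset.card_add_card_compl A
    have h4 := Finset.card_add_card_compl B
    have h5 : #Aᶜ = #Bᶜ := by omega
    rw [h5]; ring

/-- The transfer matrix is nonzero: an almost central exponent `ξ` satisfies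
`ξ - deg / 2 = 1_B - 1_A` for `A = {2 ξ < deg}` and `B = {deg < 2 ξ}`. -/
lemma exists_coeff_layerPoly_ne_zero {V : Type*} [Fintype V] [DecidableEq V] {G : SimpleGraph V}
    [DecidableRel G.Adj] (D : GraphOrientation G) (c : V →₀ ℕ)
    (hc : ∀ v, 2 * c v = G.degree v + 2) (ξ : V →₀ ℕ) (hne : coeff ξ (graphPoly D) ≠ 0)
    (hac : ∀ v, |2 * (ξ v : ℤ) - (G.degree v : ℤ)| ≤ 2) :
    ∃ A B, coeff c (layerPoly D A B) ≠ 0 := by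
  refine ⟨univ.filter fun v => 2 * ξ v < G.degree v, univ.filter fun v => G.degree v < 2 * ξ v, ?_⟩
  have h : ξ + layerExp (univ.filter fun v => 2 * ξ v < G.degree v)
      (univ.filter fun v => G.degree v < 2 * ξ v) = c := by
    ext v
    rw [Finsupp.add_apply, layerExp_apply]
    have h1 := hc v
    have h2 := abs_le.1 (hac v)
    simp only [Finset.mem_filter, Finset.mem_univ, true_and]
    split_ifs <;> omega
  rw [layerPoly_eq, coeff_C_mul, ← h, coeff_mul_monomial]
  simpa using hne

/-! ### The graph polynomial of `G □ C_{n+1}` -/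

/-- The orientation of `G □ C_{n+1}` that copies `D` in every layer and directs the cycle edges
from layer `i` to layer `i + 1`. The bound on `n` makes `C_{n+1}` a genuine cycle, in which `i + 1`
and `i - 1` differ. -/
def boxOrientation {V : Type*} [Fintype V] [DecidableEq V] {G : SimpleGraph V}
    (D : GraphOrientation G) (n : ℕ) (hn : 2 ≤ n) :
    GraphOrientation (G.boxProd (SimpleGraph.cycleGraph (n + 1))) where
  edges := (univ ×ˢ D.edges).image (fun p : Fin (n + 1) × (V × V) => ((p.2.1, p.1), (p.2.2, p.1))) ∪
    univ.image (fun p : V × Fin (n + 1) => (p, (p.1, p.2 + 1)))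
  adj_of_mem := by
    obtain ⟨n, rfl⟩ := Nat.exists_eq_add_of_le' hn
    intro e he
    simp only [Finset.mem_union, Finset.mem_image, Finset.mem_product, Finset.mem_univ,
      true_and] at he
    rw [SimpleGraph.boxProd_adj]
    rcases he with ⟨p, hp, rfl⟩ | ⟨p, rfl⟩
    · exact Or.inl ⟨D.adj_of_mem _ hp, rfl⟩
    · right
      refine ⟨?_, rfl⟩
      rw [SimpleGraph.cycleGraph_adj]
      right
      simp
  mem_iff_not_swap_mem := by
    obtain ⟨n, rfl⟩ := Nat.exists_eq_add_of_le' hn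
    have h2 : (1 + 1 : Fin (n + 2 + 1)) ≠ 0 := by
      rw [Ne, Fin.ext_iff, Fin.val_add]
      simp [Nat.mod_eq_of_lt (show 2 < n + 2 + 1 by omega)]
    rintro ⟨u, i⟩ ⟨v, j⟩ h
    have hm : ∀ u v : V, ∀ i j : Fin (n + 2 + 1), ((u, i), (v, j)) ∈ (univ ×ˢ D.edges).image
        (fun p : Fin (n + 2 + 1) × (V × V) => ((p.2.1, p.1), (p.2.2, p.1))) ∪
        univ.image (fun p : V × Fin (n + 2 + 1) => (p, (p.1, p.2 + 1))) ↔
        ((u, v) ∈ D.edges ∧ i = j) ∨ (u = v ∧ j = i + 1) := by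
      intro u v i j
      simp only [Finset.mem_union, Finset.mem_image, Finset.mem_product, Finset.mem_univ,
        true_and, Prod.exists, Prod.mk.injEq]
      constructor
      · rintro (⟨a, b, c, h, ⟨rfl, rfl⟩, rfl, rfl⟩ | ⟨a, b, ⟨rfl, rfl⟩, rfl, rfl⟩)
        · exact Or.inl ⟨h, rfl⟩
        · exact Or.inr ⟨rfl, rfl⟩
      · rintro (⟨h, rfl⟩ | ⟨rfl, rfl⟩)
        · exact Or.inl ⟨i, u, v, h, ⟨rfl, rfl⟩, rfl, rfl⟩
        · exact Or.inr ⟨u, i, ⟨rfl, rfl⟩, rfl, rfl⟩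
    rw [hm, hm]
    rw [SimpleGraph.boxProd_adj, SimpleGraph.cycleGraph_adj] at h
    rcases h with ⟨h, hij⟩ | ⟨h, huv⟩
    · simp only at h hij
      subst hij
      simp [h.ne, h.ne', D.mem_iff_not_swap_mem u v h]
    · simp only at h huv
      subst huv
      have hl : (u, u) ∉ D.edges := fun h => (D.adj_of_mem _ h).ne rfl
      simp only [hl, false_and, true_and, false_or]
      rcases h with h | h
      · have : i = j + 1 := by rw [← h]; abel
        subst this
        simp only [not_true_eq_false, iff_false]
        intro h'
        apply h2
        have h3 : j + (1 + 1) = j + 0 := by rw [← add_assoc, ← h', add_zero]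
        exact add_left_cancel h3
      · have : j = i + 1 := by rw [← h]; abel
        subst this
        simp only [true_iff]
        intro h'
        apply h2
        have h3 : i + (1 + 1) = i + 0 := by rw [← add_assoc, ← h', add_zero]
        exact add_left_cancel h3

lemma graphPoly_boxOrientation {V : Type*} [Fintype V] [DecidableEq V] {G : SimpleGraph V}
    (D : GraphOrientation G) (n : ℕ) (hn : 2 ≤ n) :
    graphPoly (boxOrientation D n hn) =
      (∏ i : Fin (n + 1), rename (fun v => (v, i)) (graphPoly D)) *
        ∏ i : Fin (n + 1), ∏ v : V, (X (v, i + 1) - X (v, i)) := by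
  rw [graphPoly, boxOrientation, Finset.prod_union, Finset.prod_image, Finset.prod_image,
    Finset.prod_product, Fintype.prod_prod_type_right]
  · simp [graphPoly, map_prod]
  · intro p _ q _ h
    exact (Prod.mk.inj h).1
  · rintro ⟨i, a, b⟩ _ ⟨j, c, d⟩ _ h
    simp only [Prod.mk.injEq] at h ⊢
    tauto
  · rw [Finset.disjoint_left]
    simp only [Finset.mem_image, Finset.mem_product, Finset.mem_univ, true_and]
    rintro _ ⟨p, hp, rfl⟩ ⟨q, hq⟩
    simp only [Prod.mk.injEq] at hq
    apply (D.adj_of_mem _ hp).ne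
    rw [← hq.2.1, hq.1]

/-- Expanding the cycle edges: `S i` is the set of `v` for which the edge from `(v, i)` to
`(v, i + 1)` contributes its head. The variables are then collected layer by layer. -/
lemma graphPoly_boxOrientation_eq_sum {V : Type*} [Fintype V] [DecidableEq V]
    {G : SimpleGraph V} (D : GraphOrientation G) (n : ℕ) (hn : 2 ≤ n) :
    graphPoly (boxOrientation D n hn) = ∑ S : Fin (n + 1) → Finset V,
      ∏ j : Fin (n + 1), rename (fun v => (v, j)) (layerPoly D (S (j - 1)) (S j)) := by
  rw [graphPoly_boxOrientation]
  simp only [sub_eq_add_neg (X _), Fintype.prod_add]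
  rw [Fintype.prod_sum, Finset.mul_sum]
  refine Finset.sum_congr rfl fun S _ => ?_
  simp only [layerPoly, map_mul, map_prod, map_neg, rename_X, Finset.prod_mul_distrib]
  rw [mul_assoc]
  congr 2
  rw [← Equiv.prod_comp (Equiv.addRight (1 : Fin (n + 1)))
    (fun j => ∏ v ∈ S (j - 1), (X (v, j) : MvPolynomial (V × Fin (n + 1)) ℝ))]
  simp

/-- The coefficient of `G □ C_{n+1}` at an exponent that is the same in all layers is a trace. -/
lemma coeff_boxOrientation {V : Type*} [Fintype V] [DecidableEq V] {G : SimpleGraph V}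
    (D : GraphOrientation G) (n : ℕ) (hn : 2 ≤ n) (c : V →₀ ℕ) (d : V × Fin (n + 1) →₀ ℕ)
    (hd : ∀ v i, d (v, i) = c v) :
    coeff d (graphPoly (boxOrientation D n hn)) =
      ((Matrix.of fun A B => coeff c (layerPoly D A B)) ^ (n + 1)).trace := by
  rw [graphPoly_boxOrientation_eq_sum, coeff_sum, ← sum_closed_walks]
  refine Finset.sum_congr rfl fun S _ => ?_
  rw [coeff_prod_rename _ d (fun _ => c) hd,
    ← Equiv.prod_comp (Equiv.addRight (1 : Fin (n + 1)))]
  simp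

/-- If all degrees of `G` are even and the graph polynomial of `G`
(w.r.t. some fixed orientation) has a nonzero almost central coefficient, then for
every `k ≥ 2` the Alon–Tarsi number of `H = G □ C_{2k}` satisfies
`AT(H) ≤ Δ(G)/2 + 2`. -/
theorem stmt1 {V : Type*} [Fintype V] [DecidableEq V] (G : SimpleGraph V)
    [DecidableRel G.Adj]
    (hEven : ∀ v, Even (G.degree v))
    (D : GraphOrientation G) (ξ : V →₀ ℕ)
    (hne : MvPolynomial.coeff ξ (graphPoly D) ≠ 0)
    (hac : ∀ v, |2 * (ξ v : ℤ) - (G.degree v : ℤ)| ≤ 2)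
    (k : ℕ) (hk : 2 ≤ k) :
    ATNumber (G.boxProd (SimpleGraph.cycleGraph (2 * k))) ≤ G.maxDegree / 2 + 2 := by
  obtain ⟨n, hn⟩ : ∃ n, 2 * k = n + 1 := ⟨2 * k - 1, by omega⟩
  have hn2 : 2 ≤ n := by omega
  -- `d` is half the degree in `G □ C_{2k}`: the central exponent, equal to `c` in every layer.
  let c : V →₀ ℕ := Finsupp.equivFunOnFinite.symm fun v => G.degree v / 2 + 1
  let d : V × Fin (n + 1) →₀ ℕ := Finsupp.equivFunOnFinite.symm fun p => G.degree p.1 / 2 + 1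
  have hc : ∀ v, 2 * c v = G.degree v + 2 := fun v => by
    have h1 : c v = G.degree v / 2 + 1 := rfl
    obtain ⟨m, hm⟩ := hEven v
    omega
  have hcoeff : coeff d (graphPoly (boxOrientation D n hn2)) ≠ 0 := by
    rw [coeff_boxOrientation D n hn2 c d fun _ _ => rfl, ← hn]
    refine trace_pow_ne_zero _ ((-1) ^ #D.edges) ?_ ?_ k
    · ext A B
      exact coeff_layerPoly_symm D c hc A B
    · obtain ⟨A, B, hAB⟩ := exists_coeff_layerPoly_ne_zero D c hc ξ hne hac
      exact fun h => hAB (congrFun (congrFun h A) B)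
  rw [hn]
  refine le_trans (b := d.support.sup d + 1)
    (Nat.sInf_le ⟨boxOrientation D n hn2, d, hcoeff, rfl⟩) ?_
  have : d.support.sup d ≤ G.maxDegree / 2 + 1 := Finset.sup_le fun p _ =>
    Nat.add_le_add_right (Nat.div_le_div_right (G.degree_le_maxDegree p.1)) 1
  omega
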